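/- arXiv:1210.1559 — 2 statements merged into one kernel-verified Lean document; each statement's English description precedes it below -/
import Mathlib

section
/- Let R be a commutative ring, n ≥ 1, and let L be a lattice in R((u))^n. Then L is a finite locally free R[[u]]-module of rank n, i.e., L is a finitely generated projective R[[u]]-module whose localization at every prime ideal of R[[u]] is free of rank n. -/
noncomputable section
namespace Pap

variable (R : Type*) [CommRing R]

/-- `u^m` as a Laurent series. -/
def U (m : ℤ) : LaurentSeries R := HahnSeries.single m 1

/-- `R[[u]]` as a `R[[u]]`-submodule of `R((u))`. -/
def psRange : Submodule (PowerSeries R) (LaurentSeries R) :=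
  LinearMap.range (Algebra.linearMap (PowerSeries R) (LaurentSeries R))

variable (n : ℕ)

/-- `R((u))^n`. -/
abbrev V := Fin n → LaurentSeries R

instance (priority := 10000) : AddCommGroup (V R n) := Pi.addCommGroup
instance (priority := 10000) : Module (PowerSeries R) (V R n) := Pi.module _ _ _
instance (priority := 10000) : Module (LaurentSeries R) (V R n) := Pi.module _ _ _

/-- Multiplication by a Laurent series, as an `R[[u]]`-linear endomorphism of `R((u))^n`. -/
def smulV (a : LaurentSeries R) : V R n →ₗ[PowerSeries R] V R n where
  toFun x := a • x
  map_add' x y := smul_add a x y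
  map_smul' c x := by
    funext i
    simp only [Pi.smul_apply, RingHom.id_apply, smul_eq_mul, Algebra.smul_def]
    exact mul_left_comm _ _ _

/-- Image of a submodule under multiplication by a Laurent series. -/
def scaleL (a : LaurentSeries R) (L : Submodule (PowerSeries R) (V R n)) :
    Submodule (PowerSeries R) (V R n) := L.map (smulV R n a)

/-- The standard lattice `R[[u]]^n`. -/
def stdLat : Submodule (PowerSeries R) (V R n) := Submodule.pi Set.univ fun _ => psRange R

/-- The quotient `B/(A ∩ B)`; for `A ≤ B` this is `B/A`. -/
abbrev subQuot (A B : Submodule (PowerSeries R) (V R n)) :=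
  B ⧸ (A.comap B.subtype)

/-- A lattice in `R((u))^n`. -/
def IsLattice (L : Submodule (PowerSeries R) (V R n)) : Prop :=
  ∃ N : ℕ, scaleL R n (U R N) (stdLat R n) ≤ L ∧ L ≤ scaleL R n (U R (-(N : ℤ))) (stdLat R n) ∧
    Module.Finite R (RestrictScalars R (PowerSeries R)
      (subQuot R n L (scaleL R n (U R (-(N : ℤ))) (stdLat R n)))) ∧
    Module.Projective R (RestrictScalars R (PowerSeries R)
      (subQuot R n L (scaleL R n (U R (-(N : ℤ))) (stdLat R n))))

end Pap
end

namespace Pap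

theorem schanuel {A K M P P' Q : Type*} [CommRing A] [AddCommGroup K] [AddCommGroup M]
    [AddCommGroup P] [AddCommGroup P'] [AddCommGroup Q] [Module A K] [Module A M] [Module A P]
    [Module A P'] [Module A Q] [Module.Projective A M] [Module.Projective A P]
    (i : K →ₗ[A] M) (f : M →ₗ[A] Q) (j : P' →ₗ[A] P) (g : P →ₗ[A] Q)
    (hi : Function.Injective i) (hif : Function.Exact i f) (hf : Function.Surjective f)
    (hj : Function.Injective j) (hjg : Function.Exact j g) (hg : Function.Surjective g) :
    Nonempty ((K × P) ≃ₗ[A] (P' × M)) := by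
  obtain ⟨s, hs⟩ := Module.projective_lifting_property g f hg
  obtain ⟨t, ht⟩ := Module.projective_lifting_property f g hf
  have hs' : ∀ m, g (s m) = f m := fun m => LinearMap.congr_fun hs m
  have ht' : ∀ m, f (t m) = g m := fun m => LinearMap.congr_fun ht m
  let E : Submodule A (M × P) := LinearMap.ker (f.coprod (-g))
  have hE : ∀ x : M × P, x ∈ E ↔ f x.1 = g x.2 := by
    intro x
    simp [E, LinearMap.mem_ker, ← sub_eq_add_neg, sub_eq_zero]
  let a : K →ₗ[A] E := (LinearMap.inl A M P ∘ₗ i).codRestrict E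
    (fun x => by rw [hE]; simp [hif.apply_apply_eq_zero])
  let b : E →ₗ[A] P := LinearMap.snd A M P ∘ₗ E.subtype
  let c : P' →ₗ[A] E := (LinearMap.inr A M P ∘ₗ j).codRestrict E
    (fun x => by rw [hE]; simp [hjg.apply_apply_eq_zero])
  let d : E →ₗ[A] M := LinearMap.fst A M P ∘ₗ E.subtype
  have ha : Function.Injective a := by
    intro x y h
    have := congrArg (fun z : E => z.1.1) h
    exact hi this
  have hc : Function.Injective c := by
    intro x y h
    have := congrArg (fun z : E => z.1.2) h
    exact hj this
  have hab : Function.Exact a b := by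
    rintro ⟨⟨m, p⟩, h⟩
    rw [hE] at h
    constructor
    · intro h0
      have h0 : p = 0 := h0
      subst h0
      obtain ⟨k, hk⟩ := (hif m).1 (by simpa using h)
      exact ⟨k, Subtype.ext (Prod.ext hk rfl)⟩
    · rintro ⟨k, hk⟩
      exact (congrArg (fun z : E => z.1.2) hk).symm
  have hcd : Function.Exact c d := by
    rintro ⟨⟨m, p⟩, h⟩
    rw [hE] at h
    constructor
    · intro h0
      have h0 : m = 0 := h0
      subst h0
      obtain ⟨k, hk⟩ := (hjg p).1 (by simpa using h.symm)
      exact ⟨k, Subtype.ext (Prod.ext rfl hk)⟩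
    · rintro ⟨k, hk⟩
      exact (congrArg (fun z : E => z.1.1) hk).symm
  let l₁ : P →ₗ[A] E := (t.prod LinearMap.id).codRestrict E
    (fun x => by rw [hE]; simp [ht'])
  let l₂ : M →ₗ[A] E := (LinearMap.id.prod s).codRestrict E
    (fun x => by rw [hE]; simp [hs'])
  have e₁ := (hab.splitSurjectiveEquiv ha ⟨l₁, rfl⟩).1
  have e₂ := (hcd.splitSurjectiveEquiv hc ⟨l₂, rfl⟩).1
  exact ⟨e₁.symm.trans e₂⟩

open TensorProduct PowerSeries

section
variable {R : Type*} [CommRing R] (Q : Type*) [AddCommGroup Q] [Module R Q]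
  [Module (PowerSeries R) Q] [IsScalarTower R (PowerSeries R) Q]

/-- multiplication by `u` on `Q` over `R` -/
noncomputable def TT : Q →ₗ[R] Q where
  toFun q := (X : PowerSeries R) • q
  map_add' := smul_add _
  map_smul' r q := by
    simp only [← algebraMap_smul (PowerSeries R) r, smul_smul, RingHom.id_apply, mul_comm]

/-- `1 ⊗ T` -/
noncomputable def TB : PowerSeries R ⊗[R] Q →ₗ[PowerSeries R] PowerSeries R ⊗[R] Q :=
  (TT (R := R) Q).baseChange (PowerSeries R)

/-- `u - T` -/
noncomputable def DD : PowerSeries R ⊗[R] Q →ₗ[PowerSeries R] PowerSeries R ⊗[R] Q :=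
  (X : PowerSeries R) • LinearMap.id - TB Q

/-- evaluation -/
noncomputable def GG : PowerSeries R ⊗[R] Q →ₗ[PowerSeries R] Q :=
  TensorProduct.AlgebraTensorModule.lift
    (LinearMap.toSpanSingleton (PowerSeries R) (Q →ₗ[R] Q) LinearMap.id |>.restrictScalars _)

theorem GG_tmul (a : PowerSeries R) (q : Q) : GG Q (a ⊗ₜ[R] q) = a • q := by
  simp [GG]

theorem TB_tmul (a : PowerSeries R) (q : Q) :
    TB Q (a ⊗ₜ[R] q) = a ⊗ₜ[R] ((X : PowerSeries R) • q) := rfl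

theorem DD_tmul (a : PowerSeries R) (q : Q) :
    DD Q (a ⊗ₜ[R] q) = (X * a) ⊗ₜ[R] q - a ⊗ₜ[R] ((X : PowerSeries R) • q) := by
  simp [DD, TB_tmul, TensorProduct.smul_tmul']

theorem TB_pow (k : ℕ) (a : PowerSeries R) (q : Q) :
    (TB Q ^ k) (a ⊗ₜ[R] q) = a ⊗ₜ[R] ((X ^ k : PowerSeries R) • q) := by
  induction k generalizing q with
  | zero => simp
  | succ k ih => rw [pow_succ, Module.End.mul_apply, TB_tmul, ih, smul_smul, pow_succ]

variable {Q} in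
theorem TB_nil {k : ℕ} (hk : ∀ q : Q, (X ^ k : PowerSeries R) • q = 0) : TB (R := R) Q ^ k = 0 := by
  apply TensorProduct.AlgebraTensorModule.ext
  intro a q
  rw [TB_pow, hk]; simp

theorem cof_gen {B : Type*} [Ring B] (x y : B) (h : Commute x y) (k : ℕ) (hy : y ^ k = 0) :
    ∃ S, S * (x - y) = x ^ k ∧ (x - y) * S = x ^ k :=
  ⟨∑ i ∈ Finset.range k, x ^ i * y ^ (k - 1 - i), by rw [h.geom_sum₂_mul, hy, sub_zero],
    by rw [h.mul_geom_sum₂, hy, sub_zero]⟩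

/-- the cofactor -/
theorem exists_cof {k : ℕ} (hk : ∀ q : Q, (X ^ k : PowerSeries R) • q = 0) :
    ∃ S : Module.End (PowerSeries R) (PowerSeries R ⊗[R] Q),
      S * DD Q = (X ^ k : PowerSeries R) • 1 ∧ DD Q * S = (X ^ k : PowerSeries R) • 1 := by
  let x : Module.End (PowerSeries R) (PowerSeries R ⊗[R] Q) := (X : PowerSeries R) • 1
  have hx : x ^ k = (X ^ k : PowerSeries R) • 1 := by simp [x, smul_pow]
  have hc : Commute x (TB Q) := by
    simp only [x]
    exact (Commute.one_left _).smul_left _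
  have hD : DD (R := R) Q = x - TB Q := rfl
  rw [hD, ← hx]
  exact cof_gen (B := Module.End (PowerSeries R) (PowerSeries R ⊗[R] Q)) x (TB Q) hc k (TB_nil hk)

theorem DD_inj [Module.Projective R Q] {k : ℕ} (hk : ∀ q : Q, (X ^ k : PowerSeries R) • q = 0) :
    Function.Injective (DD (R := R) Q) := by
  obtain ⟨S, hS, -⟩ := exists_cof Q hk
  have hreg : IsSMulRegular (PowerSeries R ⊗[R] Q) (X ^ k : PowerSeries R) := by
    apply Module.Flat.isSMulRegular_of_isRegular
    exact isRegular_iff.2 ⟨fun a b h => PowerSeries.X_pow_mul_injective h,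
      fun a b h => PowerSeries.X_pow_mul_injective (k := k)
        (by simpa only [mul_comm] using h)⟩
  intro x y h
  apply hreg
  have h1 := LinearMap.congr_fun hS x
  have h2 := LinearMap.congr_fun hS y
  simp only [Module.End.mul_apply, LinearMap.smul_apply, Module.End.one_apply] at h1 h2
  show _ • x = _ • y
  rw [← h1, ← h2, h]

theorem key_mem {k : ℕ} (hk : ∀ q : Q, (X ^ k : PowerSeries R) • q = 0)
    (a : PowerSeries R) (q : Q) :
    a ⊗ₜ[R] q - 1 ⊗ₜ[R] (a • q) ∈ LinearMap.range (DD (R := R) Q) := by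
  have hX : ∀ q : Q, (X : PowerSeries R) ⊗ₜ[R] q - 1 ⊗ₜ[R] ((X : PowerSeries R) • q) ∈
      LinearMap.range (DD (R := R) Q) := fun q => ⟨1 ⊗ₜ q, by rw [DD_tmul, mul_one]⟩
  have hmul : ∀ a b : PowerSeries R,
      (∀ q : Q, a ⊗ₜ[R] q - 1 ⊗ₜ[R] (a • q) ∈ LinearMap.range (DD (R := R) Q)) →
      (∀ q : Q, b ⊗ₜ[R] q - 1 ⊗ₜ[R] (b • q) ∈ LinearMap.range (DD (R := R) Q)) →
      (∀ q : Q, (a * b) ⊗ₜ[R] q - 1 ⊗ₜ[R] ((a * b) • q) ∈ LinearMap.range (DD (R := R) Q)) := by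
    intro a b ha hb q
    have h := add_mem (Submodule.smul_mem _ a (hb q)) (ha (b • q))
    simpa [smul_sub, TensorProduct.smul_tmul', smul_smul] using h
  have hadd : ∀ a b : PowerSeries R,
      (∀ q : Q, a ⊗ₜ[R] q - 1 ⊗ₜ[R] (a • q) ∈ LinearMap.range (DD (R := R) Q)) →
      (∀ q : Q, b ⊗ₜ[R] q - 1 ⊗ₜ[R] (b • q) ∈ LinearMap.range (DD (R := R) Q)) →
      (∀ q : Q, (a + b) ⊗ₜ[R] q - 1 ⊗ₜ[R] ((a + b) • q) ∈ LinearMap.range (DD (R := R) Q)) := by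
    intro a b ha hb q
    have h := add_mem (ha q) (hb q)
    rw [TensorProduct.add_tmul, add_smul, TensorProduct.tmul_add]
    convert h using 1
    abel
  have hC : ∀ (r : R) (q : Q), (algebraMap R (PowerSeries R) r) ⊗ₜ[R] q -
      1 ⊗ₜ[R] ((algebraMap R (PowerSeries R) r) • q) ∈ LinearMap.range (DD (R := R) Q) := by
    intro r q
    rw [algebraMap_smul, Algebra.algebraMap_eq_smul_one, TensorProduct.smul_tmul, sub_self]
    exact zero_mem _
  have hpoly : ∀ (p : Polynomial R) (q : Q), (p : PowerSeries R) ⊗ₜ[R] q -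
      1 ⊗ₜ[R] ((p : PowerSeries R) • q) ∈ LinearMap.range (DD (R := R) Q) := by
    intro p
    induction p using Polynomial.induction_on with
    | C r => simpa using hC r
    | add p q hp hq => rw [Polynomial.coe_add]; exact hadd _ _ hp hq
    | monomial n r h =>
      rw [pow_succ, ← mul_assoc, Polynomial.coe_mul, Polynomial.coe_X]
      exact hmul _ _ h hX
  rw [PowerSeries.eq_X_pow_mul_shift_add_trunc k a]
  refine hadd _ _ ?_ (hpoly _) q
  intro q
  obtain ⟨S, -, hS⟩ := exists_cof Q hk
  rw [mul_comm, mul_smul, hk, smul_zero, TensorProduct.tmul_zero, sub_zero]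
  rw [mul_comm, ← smul_eq_mul, ← TensorProduct.smul_tmul']
  exact ⟨S _, LinearMap.congr_fun hS (_ ⊗ₜ[R] q)⟩

theorem DD_exact {k : ℕ} (hk : ∀ q : Q, (X ^ k : PowerSeries R) • q = 0) :
    Function.Exact (DD (R := R) Q) (GG Q) := by
  have hmem : ∀ z : PowerSeries R ⊗[R] Q, z - 1 ⊗ₜ[R] (GG Q z) ∈
      LinearMap.range (DD (R := R) Q) := by
    intro z
    induction z with
    | zero => simp
    | tmul a q => rw [GG_tmul]; exact key_mem Q hk a q
    | add x y hx hy =>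
      rw [map_add, TensorProduct.tmul_add]
      convert add_mem hx hy using 1
      abel
  intro z
  constructor
  · intro hz
    have := hmem z
    rwa [hz, TensorProduct.tmul_zero, sub_zero] at this
  · rintro ⟨y, rfl⟩
    induction y with
    | zero => simp
    | tmul a q => rw [DD_tmul, map_sub, GG_tmul, GG_tmul, smul_smul, mul_comm, sub_self]
    | add x y hx hy => rw [map_add, map_add, hx, hy, add_zero]

theorem GG_surj : Function.Surjective (GG (R := R) Q) := fun q => ⟨1 ⊗ₜ q, by simp [GG_tmul]⟩

theorem main_alg [Module.Finite R Q] [Module.Projective R Q] {k n : ℕ}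
    (hk : ∀ q : Q, (X ^ k : PowerSeries R) • q = 0)
    {K M : Type*} [AddCommGroup K] [AddCommGroup M] [Module (PowerSeries R) K]
    [Module (PowerSeries R) M] (eM : M ≃ₗ[PowerSeries R] (Fin n → PowerSeries R))
    (i : K →ₗ[PowerSeries R] M) (f : M →ₗ[PowerSeries R] Q)
    (hi : Function.Injective i) (hif : Function.Exact i f) (hf : Function.Surjective f) :
    Module.Finite (PowerSeries R) K ∧ Module.Projective (PowerSeries R) K ∧
      ∀ (P : Ideal (PowerSeries R)) [P.IsPrime],
        Module.Free (Localization P.primeCompl) (LocalizedModule P.primeCompl K) ∧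
        Module.finrank (Localization P.primeCompl) (LocalizedModule P.primeCompl K) = n := by
  have : Module.Free (PowerSeries R) M := Module.Free.of_equiv eM.symm
  have : Module.Finite (PowerSeries R) M := Module.Finite.equiv eM.symm
  obtain ⟨e⟩ := schanuel i f (DD Q) (GG Q) hi hif hf (DD_inj Q hk) (DD_exact Q hk) (GG_surj Q)
  have hP : Module.Projective (PowerSeries R) (K × (PowerSeries R ⊗[R] Q)) :=
    Module.Projective.of_equiv e.symm
  have hF : Module.Finite (PowerSeries R) (K × (PowerSeries R ⊗[R] Q)) :=
    Module.Finite.equiv e.symm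
  have hKP : Module.Projective (PowerSeries R) K :=
    Module.Projective.of_split (LinearMap.inl _ _ _) (LinearMap.fst _ _ _)
      (LinearMap.fst_comp_inl (R := PowerSeries R) (M := K) (M₂ := PowerSeries R ⊗[R] Q))
  have hKF : Module.Finite (PowerSeries R) K :=
    Module.Finite.of_surjective (LinearMap.fst _ K (PowerSeries R ⊗[R] Q)) Prod.fst_surjective
  refine ⟨hKF, hKP, fun P _ => ?_⟩
  refine ⟨?_, ?_⟩
  · have h : (⟨P, ‹_›⟩ : PrimeSpectrum (PowerSeries R)) ∈ Module.freeLocus (PowerSeries R) K := by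
      rw [Module.freeLocus_eq_univ]; trivial
    exact h
  · have h := congrFun (Module.rankAtStalk_eq_of_equiv e) ⟨P, ‹_›⟩
    rw [Module.rankAtStalk_prod, Module.rankAtStalk_prod] at h
    have : Nontrivial (PowerSeries R) := by
      by_contra hn
      rw [not_nontrivial_iff_subsingleton] at hn
      exact ‹P.IsPrime›.ne_top (Subsingleton.elim _ _)
    have hM : Module.rankAtStalk (R := PowerSeries R) M ⟨P, ‹_›⟩ = n := by
      rw [Module.rankAtStalk_eq_of_equiv eM, Module.rankAtStalk_eq_finrank_of_free]
      simp
    simp only [Pi.add_apply, hM] at h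
    have h' : Module.rankAtStalk (R := PowerSeries R) K ⟨P, ‹_›⟩ = n := by omega
    exact h'
end

variable (R : Type*) [CommRing R] (n : ℕ)

theorem U_mul (a b : ℤ) : U R a * U R b = U R (a + b) := by
  simp [U, HahnSeries.single_mul_single]

theorem U_zero : U R 0 = 1 := rfl

theorem smulV_inj (m : ℤ) : Function.Injective (smulV R n (U R m)) := by
  intro x y h
  have h2 : U R (-m) • (U R m • x) = U R (-m) • (U R m • y) := congrArg (U R (-m) • ·) h
  simpa [smul_smul, U_mul, U_zero] using h2

theorem std_equiv : Nonempty (stdLat R n ≃ₗ[PowerSeries R] (Fin n → PowerSeries R)) := by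
  let φ : (Fin n → PowerSeries R) →ₗ[PowerSeries R] V R n :=
    (Algebra.linearMap (PowerSeries R) (LaurentSeries R)).compLeft (Fin n)
  have hφ : Function.Injective φ := by
    intro x y h
    funext i
    exact HahnSeries.ofPowerSeries_injective (Γ := ℤ) (congrFun h i)
  have hr : LinearMap.range φ = stdLat R n := by
    ext v
    simp only [stdLat, psRange, Submodule.mem_pi, LinearMap.mem_range, Set.mem_univ, true_imp_iff]
    constructor
    · rintro ⟨y, rfl⟩ i
      exact ⟨y i, rfl⟩
    · intro h
      choose y hy using h
      exact ⟨y, funext hy⟩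
  exact ⟨((LinearEquiv.ofInjective φ hφ).trans (LinearEquiv.ofEq _ _ hr)).symm⟩

theorem scale_equiv (m : ℤ) :
    Nonempty (scaleL R n (U R m) (stdLat R n) ≃ₗ[PowerSeries R] (Fin n → PowerSeries R)) := by
  obtain ⟨e⟩ := std_equiv R n
  exact ⟨(Submodule.equivMapOfInjective _ (smulV_inj R n m) (stdLat R n)).symm.trans e⟩

theorem X_pow_smul (k : ℕ) (v : V R n) : (X ^ k : PowerSeries R) • v = U R k • v := by
  funext i
  rw [Pi.smul_apply, Pi.smul_apply, Algebra.smul_def, smul_eq_mul]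
  congr 1
  simp [U, LaurentSeries.coe_algebraMap, HahnSeries.ofPowerSeries_X_pow]

end Pap

open Pap in
/-- A lattice in `R((u))^n` is a finite locally free `R[[u]]`-module of rank `n`. -/
theorem stmt4 (R : Type*) [CommRing R] (n : ℕ) (hn : 1 ≤ n)
    (L : Submodule (PowerSeries R) (V R n)) (hL : IsLattice R n L) :
    Module.Finite (PowerSeries R) L ∧ Module.Projective (PowerSeries R) L ∧
      ∀ (P : Ideal (PowerSeries R)) [P.IsPrime],
        Module.Free (Localization P.primeCompl) (LocalizedModule P.primeCompl L) ∧
        Module.finrank (Localization P.primeCompl) (LocalizedModule P.primeCompl L) = n := by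
  obtain ⟨N, h1, h2, h3, h4⟩ := hL
  obtain ⟨eM⟩ := scale_equiv R n (-(N : ℤ))
  let Q := subQuot R n L (scaleL R n (U R (-(N : ℤ))) (stdLat R n))
  let : Module R Q := Module.restrictScalars R (PowerSeries R) Q
  have : IsScalarTower R (PowerSeries R) Q := IsScalarTower.restrictScalars R (PowerSeries R) Q
  have : Module.Finite R Q := h3
  have : Module.Projective R Q := h4
  let f : scaleL R n (U R (-(N : ℤ))) (stdLat R n) →ₗ[PowerSeries R] Q :=
    (L.comap (scaleL R n (U R (-(N : ℤ))) (stdLat R n)).subtype).mkQ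
  have hf : Function.Surjective f := Submodule.mkQ_surjective _
  have hf0 : ∀ x, f x = 0 ↔ x.1 ∈ L := fun x =>
    Submodule.Quotient.mk_eq_zero _
  refine main_alg Q (k := N + N) ?_ eM
      (Submodule.inclusion h2) f (Submodule.inclusion_injective h2) ?_ hf
  · intro q
    obtain ⟨⟨x, hx⟩, rfl⟩ := hf q
    rw [← map_smul, hf0]
    apply h1
    obtain ⟨y, hy, rfl⟩ := hx
    refine ⟨y, hy, ?_⟩
    show U R N • y = (PowerSeries.X ^ (N + N) : PowerSeries R) • (U R (-(N : ℤ)) • y)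
    rw [X_pow_smul, smul_smul, U_mul]
    congr 2
    push_cast
    ring
  · intro x
    rw [hf0]
    constructor
    · intro h
      exact ⟨⟨x.1, h⟩, rfl⟩
    · rintro ⟨y, rfl⟩
      exact y.2
end

section
/- Let F be a field, n ≥ 1, w ∈ S_n and λ ∈ ℤ^n, and set x = A_w·u^λ ∈ GL_n(F((u))). Assume x·Λ̃_j ⊆ Λ̃_j for all j ∈ ℤ. Then for every i ∈ {1,…,n}: Λ̃_i = x·Λ̃_i + Λ̃_{i-1} if and only if w(i) = i and λ(i) = 0. -/
noncomputable section
namespace Pap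

variable (R : Type*) [CommRing R]

variable (n : ℕ)

/-- Exponent of `u` governing the `t`-th coordinate of the `j`-th standard lattice:
for `j = nk + i` with `0 ≤ i < n` it equals `k+1` for `t+1 ≤ i` and `k` otherwise. -/
def dex (j : ℤ) (t : Fin n) : ℤ := (j - ((t : ℤ) + 1)) / n + 1

/-- The standard lattice chain `Λ̃_j`, `j ∈ ℤ`: the `R[[u]]`-submodule with basis
`u^{-1}e_1, …, u^{-1}e_i, e_{i+1}, …, e_n` for `0 ≤ j = i < n`, extended by
`Λ̃_{nk+i} = u^{-k}·Λ̃_i`. -/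
def stdChain (j : ℤ) : Submodule (PowerSeries R) (V R n) :=
  Submodule.span (PowerSeries R)
    (Set.range fun t : Fin n =>
      (fun s => if s = t then U R (-(dex n j t)) else 0 : V R n))

/-- The image of an `R[[u]]`-submodule of `R((u))^n` under a matrix over `R((u))`. -/
def matLat (x : Matrix (Fin n) (Fin n) (LaurentSeries R))
    (L : Submodule (PowerSeries R) (V R n)) : Submodule (PowerSeries R) (V R n) :=
  L.map ((Matrix.mulVecLin x).restrictScalars (PowerSeries R))

/-- The permutation matrix `A_w`. -/
def permMatrix (w : Equiv.Perm (Fin n)) : Matrix (Fin n) (Fin n) (LaurentSeries R) :=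
  Matrix.of fun i j => if i = w j then 1 else 0

/-- The matrix `A_w · u^λ`. -/
def xMat (w : Equiv.Perm (Fin n)) (lam : Fin n → ℤ) :
    Matrix (Fin n) (Fin n) (LaurentSeries R) :=
  permMatrix R n w * Matrix.diagonal fun t => U R (lam t)

end Pap
end

namespace Pap

theorem smul_U_coeff {F : Type*} [Field F] (p : PowerSeries F) (a m : ℤ) (hm : m < a) :
    HahnSeries.coeff (p • U F a : LaurentSeries F) m = 0 := by
  rw [Algebra.smul_def, LaurentSeries.coe_algebraMap, U, HahnSeries.coeff_mul_single,
    PowerSeries.coeff_coe, if_pos (by omega), zero_mul]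

theorem mem_exists {F : Type*} [Field F] {n : ℕ} {j : ℤ} {v : V F n} (hv : v ∈ stdChain F n j) :
    ∀ s, ∃ p : PowerSeries F, v s = p • U F (-(dex n j s)) := by
  unfold stdChain at hv
  induction hv using Submodule.span_induction with
  | mem x hx =>
    obtain ⟨t, rfl⟩ := hx
    intro s
    by_cases h : s = t
    · subst h; exact ⟨1, by simp⟩
    · exact ⟨0, by simp [h]⟩
  | zero => intro s; exact ⟨0, by simp⟩
  | add x y _ _ hx hy =>
    intro s
    obtain ⟨p, hp⟩ := hx s
    obtain ⟨q, hq⟩ := hy s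
    exact ⟨p + q, by rw [add_smul, ← hp, ← hq]; rfl⟩
  | smul a x _ hx =>
    intro s
    obtain ⟨p, hp⟩ := hx s
    exact ⟨a * p, by rw [mul_smul, ← hp]; rfl⟩

theorem mem_coeff {F : Type*} [Field F] {n : ℕ} {j : ℤ} {v : V F n} (hv : v ∈ stdChain F n j)
    (s : Fin n) (m : ℤ) (hm : m < -(dex n j s)) : (v s).coeff m = 0 := by
  obtain ⟨p, hp⟩ := mem_exists hv s
  rw [hp]; exact smul_U_coeff _ _ _ hm

/-- generator -/
noncomputable def gen (F : Type*) [Field F] (n : ℕ) (t : Fin n) (a : ℤ) : V F n :=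
  fun s => if s = t then U F a else 0

theorem gen_mem (F : Type*) [Field F] (n : ℕ) (t : Fin n) (j : ℤ) :
    gen F n t (-(dex n j t)) ∈ stdChain F n j :=
  Submodule.subset_span ⟨t, rfl⟩

theorem xMat_apply {F : Type*} [Field F] {n : ℕ} (w : Equiv.Perm (Fin n)) (lam : Fin n → ℤ)
    (v : V F n) (t : Fin n) :
    ((xMat F n w lam).mulVec v) (w t) = U F (lam t) * v t := by
  simp [xMat, permMatrix, Matrix.mulVec, dotProduct, Matrix.mul_diagonal]

theorem xMat_coeff {F : Type*} [Field F] {n : ℕ} (w : Equiv.Perm (Fin n)) (lam : Fin n → ℤ)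
    (v : V F n) (t : Fin n) (m : ℤ) :
    (((xMat F n w lam).mulVec v) (w t)).coeff m = (v t).coeff (m - lam t) := by
  rw [xMat_apply, U, HahnSeries.coeff_single_mul, one_mul]

theorem xMat_gen {F : Type*} [Field F] {n : ℕ} (w : Equiv.Perm (Fin n)) (lam : Fin n → ℤ)
    (t : Fin n) (a : ℤ) :
    (xMat F n w lam).mulVec (gen F n t a) = gen F n (w t) (lam t + a) := by
  funext s
  obtain ⟨r, rfl⟩ := w.surjective s
  rw [xMat_apply]
  by_cases h : r = t
  · subst h; simp [gen, U]
  · simp [gen, h]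

theorem stab_ineq {F : Type*} [Field F] {n : ℕ} {w : Equiv.Perm (Fin n)} {lam : Fin n → ℤ} {j : ℤ}
    (h : matLat F n (xMat F n w lam) (stdChain F n j) ≤ stdChain F n j) (t : Fin n) :
    -(dex n j (w t)) ≤ lam t - dex n j t := by
  by_contra hc
  have h1 : (xMat F n w lam).mulVec (gen F n t (-(dex n j t))) ∈ stdChain F n j :=
    h (Submodule.mem_map_of_mem (f := (Matrix.mulVecLin (xMat F n w lam)).restrictScalars
      (PowerSeries F)) (gen_mem F n t j))
  have h2 := mem_coeff h1 (w t) (lam t - dex n j t) (by omega)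
  rw [xMat_gen] at h2
  simp [gen, U, sub_eq_add_neg] at h2

theorem dex_self (n : ℕ) (i : Fin n) : dex n i i = 0 := by
  have hn : (0 : ℤ) < n := by have := i.2; omega
  unfold dex
  have : ((i : ℤ) - ((i : ℤ) + 1)) / n = -1 := by
    rw [show (i : ℤ) - ((i : ℤ) + 1) = -1 by ring]
    exact Int.ediv_eq_iff_of_pos hn |>.2 (by constructor <;> omega)
  omega

theorem dex_succ_self (n : ℕ) (i : Fin n) : dex n (i + 1) i = 1 := by
  simp [dex]

theorem dex_succ_ne (n : ℕ) (i t : Fin n) (h : t ≠ i) : dex n (i + 1) t = dex n i t := by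
  have hi := i.2
  have ht := t.2
  have h' : (t : ℕ) ≠ i := fun e => h (Fin.ext e)
  have hn : (0 : ℤ) < n := by omega
  unfold dex
  congr 1
  rcases lt_or_gt_of_ne h' with h1 | h1
  · rw [Int.ediv_eq_zero_of_lt (by omega) (by omega), Int.ediv_eq_zero_of_lt (by omega) (by omega)]
  · have e1 : ((i : ℤ) + 1 - ((t : ℤ) + 1)) / n = -1 :=
      (Int.ediv_eq_iff_of_pos hn).2 (by constructor <;> omega)
    have e2 : ((i : ℤ) - ((t : ℤ) + 1)) / n = -1 :=
      (Int.ediv_eq_iff_of_pos hn).2 (by constructor <;> omega)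
    rw [e1, e2]

theorem chain_le (F : Type*) [Field F] (n : ℕ) (i : Fin n) :
    stdChain F n (i : ℤ) ≤ stdChain F n ((i : ℤ) + 1) := by
  refine Submodule.span_le.2 ?_
  rintro _ ⟨t, rfl⟩
  change gen F n t (-(dex n i t)) ∈ stdChain F n ((i : ℤ) + 1)
  by_cases h : t = i
  · subst h
    have h1 := Submodule.smul_mem _ (PowerSeries.X : PowerSeries F) (gen_mem F n t ((t : ℤ) + 1))
    convert h1 using 1
    funext s
    change _ = (PowerSeries.X : PowerSeries F) • (gen F n t (-(dex n (t + 1) t)) s)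
    rw [Algebra.smul_def, LaurentSeries.coe_algebraMap, PowerSeries.coe_X, dex_self, dex_succ_self]
    by_cases h : s = t
    · simp [gen, h, U]
    · simp [gen, h]
  · rw [← dex_succ_ne n i t h]
    exact gen_mem F n t _

end Pap

open Pap in
/-- For `x = A_w u^λ` stabilizing the standard chain, `Λ̃_i = x Λ̃_i + Λ̃_{i-1}` iff
`w(i) = i` and `λ(i) = 0` (indices `i ∈ {1,…,n}`; here `i : Fin n` denotes the
`1`-indexed entry `i+1`). -/
theorem stmt12 (F : Type*) [Field F] (n : ℕ) (hn : 1 ≤ n)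
    (w : Equiv.Perm (Fin n)) (lam : Fin n → ℤ)
    (hstab : ∀ j : ℤ, matLat F n (xMat F n w lam) (stdChain F n j) ≤ stdChain F n j) :
    ∀ i : Fin n,
      (stdChain F n ((i : ℤ) + 1) =
          matLat F n (xMat F n w lam) (stdChain F n ((i : ℤ) + 1)) ⊔ stdChain F n (i : ℤ))
        ↔ (w i = i ∧ lam i = 0) := by
  intro i
  constructor
  · intro h
    have h1 := gen_mem F n i ((i : ℤ) + 1)
    rw [h] at h1
    obtain ⟨y, hy, c, hc, hyc⟩ := Submodule.mem_sup.1 h1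
    obtain ⟨a, ha, rfl⟩ := hy
    change (xMat F n w lam).mulVec a + c = _ at hyc
    obtain ⟨t, ht⟩ := w.surjective i
    have h2 : (((xMat F n w lam).mulVec a) i).coeff (-1) + (c i).coeff (-1) = 1 := by
      have := congrArg (fun v : V F n => (v i).coeff (-1)) hyc
      simpa [gen, U, dex_succ_self] using this
    rw [mem_coeff hc i (-1) (by rw [dex_self]; omega), add_zero] at h2
    have h3 : -1 - lam t ≥ -(dex n ((i : ℤ) + 1) t) := by
      by_contra hlt
      have h4 := xMat_coeff w lam a t (-1)
      rw [ht, mem_coeff ha t _ (by omega), h2] at h4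
      exact one_ne_zero h4
    have h5 := stab_ineq (hstab (i : ℤ)) t
    rw [ht, dex_self] at h5
    have hti : t = i := by
      by_contra hne
      rw [dex_succ_ne n i t hne] at h3
      omega
    subst hti
    rw [dex_self] at h5
    rw [dex_succ_self] at h3
    exact ⟨ht, by omega⟩
  · rintro ⟨hw, hl⟩
    refine le_antisymm ?_ (sup_le (hstab _) (chain_le F n i))
    refine Submodule.span_le.2 ?_
    rintro _ ⟨t, rfl⟩
    change gen F n t (-(dex n ((i : ℤ) + 1) t)) ∈ _
    by_cases h : t = i
    · subst h
      refine Submodule.mem_sup_left ⟨_, gen_mem F n t _, ?_⟩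
      change (xMat F n w lam).mulVec _ = _
      rw [xMat_gen, hw, hl, zero_add]
    · refine Submodule.mem_sup_right ?_
      rw [dex_succ_ne n i t h]
      exact gen_mem F n t _
end
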